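/- arXiv:2509.16344 — 4 statements merged into one kernel-verified Lean document; each statement's English description precedes it below -/
import Mathlib

section
/- Let X be a Banach space, let Y₁ be a closed subspace of X, and let y₀ ∈ X be such that ρ(y₀, Y₁) = ρ₀ > 0 and y₀ admits no best approximation from Y₁ (i.e. ‖y₀ − y‖ > ρ₀ for every y ∈ Y₁). Let Y₂ denote the closure of the linear span of Y₁ ∪ {y₀}. Then there is no element x ∈ Y₂ satisfying ‖x‖ = ρ₀ and ρ(x, Y₁) = ρ₀. -/
open Metric Filter

/-!
Let `x` be in the span of `Y₁ ∪ {y₀}` but not in `Y₁`. By the exchange property,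
`y₀ = a • x + z` for some scalar `a` and some `z ∈ Y₁`. If `y` is a best approximation to `x` from
`Y₁`, then `a • y + z` is one to `y₀`. Now `‖x‖ = ρ(x, Y₁)` says exactly that `0` is a best
approximation to `x`. Passing to the closure adds nothing, because a closed subspace stays closed
when one vector is adjoined to it.
-/

section BestApproximation

/-- `y` is a best approximation to `x` from the set `s`: a point of `s` at which the distance
from `x` to `s` is attained. -/
def IsBestApprox {X : Type*} [PseudoMetricSpace X] (s : Set X) (x y : X) : Prop :=
  y ∈ s ∧ dist x y = infDist x s

variable {X : Type*} [SeminormedAddCommGroup X]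

theorem forall_infDist_lt_norm_sub_iff {s : Set X} {x : X} :
    (∀ y ∈ s, infDist x s < ‖x - y‖) ↔ ¬ ∃ y, IsBestApprox s x y := by
  simp only [IsBestApprox, not_exists, not_and, ← dist_eq_norm]
  exact forall₂_congr fun y hy => (infDist_le_dist_of_mem hy).lt_iff_ne'

theorem infDist_add_of_mem {Y : AddSubgroup X} {z : X} (hz : z ∈ Y) (x : X) :
    infDist (x + z) (Y : Set X) = infDist x Y := by
  rw [← QuotientAddGroup.norm_mk, ← QuotientAddGroup.norm_mk, QuotientAddGroup.mk_add_of_mem x hz]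

theorem IsBestApprox.add_of_mem {Y : AddSubgroup X} {x y z : X} (h : IsBestApprox (Y : Set X) x y)
    (hz : z ∈ Y) : IsBestApprox (Y : Set X) (x + z) (y + z) :=
  ⟨Y.add_mem h.1 hz, by rw [dist_add_right, infDist_add_of_mem hz, h.2]⟩

variable {𝕜 : Type*} [NormedDivisionRing 𝕜] [Module 𝕜 X] [NormSMulClass 𝕜 X] {Y : Submodule 𝕜 X}

open scoped Pointwise in
theorem infDist_smul_submodule (Y : Submodule 𝕜 X) (c : 𝕜) (x : X) :
    infDist (c • x) (Y : Set X) = ‖c‖ * infDist x Y := by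
  obtain rfl | hc := eq_or_ne c 0
  · rw [zero_smul, norm_zero, zero_mul, infDist_zero_of_mem Y.zero_mem]
  · have smul_coe : c • (Y : Set X) = Y := by
      ext y
      rw [Set.mem_smul_set_iff_inv_smul_mem₀ hc, SetLike.mem_coe, SetLike.mem_coe,
        Y.smul_mem_iff (inv_ne_zero hc)]
    rw [← infDist_smul₀ hc, smul_coe]

theorem IsBestApprox.smul {x y : X} (h : IsBestApprox (Y : Set X) x y) (c : 𝕜) :
    IsBestApprox (Y : Set X) (c • x) (c • y) :=
  ⟨Y.smul_mem c h.1, by rw [dist_smul₀, infDist_smul_submodule, h.2]⟩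

theorem exists_isBestApprox_of_mem_span_insert {x y₀ : X}
    (hx : x ∈ Submodule.span 𝕜 (insert y₀ (Y : Set X))) (hxY : x ∉ Y)
    (h : ∃ y, IsBestApprox (Y : Set X) x y) : ∃ y, IsBestApprox (Y : Set X) y₀ y := by
  obtain ⟨y, hy⟩ := h
  have exchange : y₀ ∈ Submodule.span 𝕜 (insert x (Y : Set X)) :=
    mem_span_insert_exchange hx (by rwa [Submodule.span_eq])
  obtain ⟨a, z, hz, rfl⟩ := Submodule.mem_span_insert.mp exchange
  rw [Submodule.span_eq] at hz
  exact ⟨a • y + z, (hy.smul a).add_of_mem (Y := Y.toAddSubgroup) hz⟩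

end BestApproximation

theorem isClosed_span_insert {𝕜 E : Type*} [NontriviallyNormedField 𝕜] [CompleteSpace 𝕜]
    [AddCommGroup E] [TopologicalSpace E] [IsTopologicalAddGroup E] [Module 𝕜 E]
    [ContinuousSMul 𝕜 E] {Y : Submodule 𝕜 E} (hY : IsClosed (Y : Set E)) (v : E) :
    IsClosed (Submodule.span 𝕜 (insert v (Y : Set E)) : Set E) := by
  rw [Submodule.span_insert, Submodule.span_eq, sup_comm]
  exact Y.isClosed_sup_finiteDimensional _ hY

theorem stmt_11_general {𝕜 X : Type*} [NontriviallyNormedField 𝕜] [CompleteSpace 𝕜]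
    [SeminormedAddCommGroup X] [NormedSpace 𝕜 X] {Y : Submodule 𝕜 X} (hY : IsClosed (Y : Set X))
    {y₀ : X} (hy₀ : ∀ y ∈ Y, infDist y₀ (Y : Set X) < ‖y₀ - y‖) {x : X}
    (hx : x ∈ closure (Submodule.span 𝕜 (insert y₀ (Y : Set X)) : Set X)) (hxY : x ∉ Y) :
    ∀ y ∈ Y, infDist x (Y : Set X) < ‖x - y‖ := by
  rw [(isClosed_span_insert hY y₀).closure_eq] at hx
  exact forall_infDist_lt_norm_sub_iff.mpr fun h =>
    forall_infDist_lt_norm_sub_iff.mp hy₀ (exists_isBestApprox_of_mem_span_insert hx hxY h)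

/-- If `y₀` has distance `ρ₀ > 0` to a closed subspace `Y₁` but admits no best approximation
from `Y₁`, then no element `x` of the closed span `Y₂` of `Y₁ ∪ {y₀}` satisfies
`‖x‖ = ρ₀` and `ρ(x, Y₁) = ρ₀`. -/
theorem stmt_11 (X : Type*) [NormedAddCommGroup X] [NormedSpace ℝ X] [CompleteSpace X]
    (Y₁ : Submodule ℝ X) (hclosed : IsClosed (Y₁ : Set X))
    (y₀ : X) (ρ₀ : ℝ) (hρ : infDist y₀ (Y₁ : Set X) = ρ₀) (hρpos : 0 < ρ₀)
    (hnobest : ∀ y ∈ Y₁, ρ₀ < ‖y₀ - y‖) :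
    ¬ ∃ x ∈ closure (Submodule.span ℝ (insert y₀ (Y₁ : Set X)) : Set X),
        ‖x‖ = ρ₀ ∧ infDist x (Y₁ : Set X) = ρ₀ := by
  rintro ⟨x, hx, hxn, hxd⟩
  have hxY : x ∉ Y₁ := fun h => hρpos.ne (infDist_zero_of_mem h ▸ hxd)
  simpa [hxn, hxd] using stmt_11_general hclosed (hρ ▸ hnobest) hx hxY 0 Y₁.zero_mem
end

section
/- Let X be a normed linear space, Y a subspace of X, x ∈ X, and y ∈ X with ρ(y, Y) > 0. Then for every real number e with e ≥ ρ(x, Y) there exists t ≥ 0 such that ρ(x + t·y, Y) = e. -/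
open Metric Filter

/-!
The distance to `Y` is the quotient seminorm on `X ⧸ Y`, so one may work with the images of `x` and
`y` there: as the image of `y` has nonzero norm, the norm along the ray from `x` in direction `y` is
continuous and tends to infinity, and the intermediate value theorem applies.
-/

section Ray

variable {E : Type*} [SeminormedAddCommGroup E] [NormedSpace ℝ E]

theorem tendsto_norm_add_smul_atTop (u : E) {v : E} (hv : 0 < ‖v‖) :
    Tendsto (fun t : ℝ ↦ ‖u + t • v‖) atTop atTop := by
  have hlinear : Tendsto (fun t : ℝ ↦ t * ‖v‖ - ‖u‖) atTop atTop :=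
    tendsto_atTop_add_const_right _ _ (tendsto_id.atTop_mul_const hv)
  refine tendsto_atTop_mono (fun t ↦ ?_) hlinear
  calc
    t * ‖v‖ - ‖u‖ ≤ ‖t • v‖ - ‖u‖ := by
      rw [norm_smul]
      gcongr
      exact Real.le_norm_self t
    _ ≤ ‖u + t • v‖ := by
      rw [add_comm]
      exact norm_sub_le_norm_add _ _

theorem exists_nonneg_norm_add_smul_eq {u v : E} (hv : 0 < ‖v‖) {r : ℝ} (hr : ‖u‖ ≤ r) :
    ∃ t : ℝ, 0 ≤ t ∧ ‖u + t • v‖ = r := by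
  have hcont : ContinuousOn (fun t : ℝ ↦ ‖u + t • v‖) (Set.Ici 0) := by fun_prop
  have hsurj := isPreconnected_Ici.intermediate_value_Ici Set.self_mem_Ici
    (le_principal_iff.mpr (Ici_mem_atTop 0)) hcont (tendsto_norm_add_smul_atTop u hv)
  exact hsurj (by simpa using hr)

end Ray

theorem norm_mkQ_eq_infDist {R M : Type*} [Ring R] [SeminormedAddCommGroup M] [Module R M]
    (S : Submodule R M) (m : M) : ‖S.mkQ m‖ = infDist m (S : Set M) :=
  QuotientAddGroup.norm_mk (S := S.toAddSubgroup) m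

theorem stmt_14_general {X : Type*} [SeminormedAddCommGroup X] [NormedSpace ℝ X]
    (Y : Submodule ℝ X) (x y : X) (hy : 0 < infDist y (Y : Set X))
    (e : ℝ) (he : infDist x (Y : Set X) ≤ e) :
    ∃ t : ℝ, 0 ≤ t ∧ infDist (x + t • y) (Y : Set X) = e := by
  simp only [← norm_mkQ_eq_infDist, map_add, map_smul] at hy he ⊢
  exact exists_nonneg_norm_add_smul_eq hy he

/-- If `ρ(y, Y) > 0`, then for every `e ≥ ρ(x, Y)` there is `t ≥ 0` with
`ρ(x + t • y, Y) = e`. -/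
theorem stmt_14 (X : Type*) [NormedAddCommGroup X] [NormedSpace ℝ X]
    (Y : Submodule ℝ X) (x y : X) (hy : 0 < infDist y (Y : Set X)) :
    ∀ e : ℝ, infDist x (Y : Set X) ≤ e →
      ∃ t : ℝ, 0 ≤ t ∧ infDist (x + t • y) (Y : Set X) = e :=
  stmt_14_general Y x y hy
end

section
/- Let X be a reflexive Banach space, let Y′ ⊂ Y be closed subspaces of X with Y′ ≠ Y, let u ∈ X, and set e := ρ(u, Y). Then for every real number e′ with e′ ≥ e there exists v ∈ Y such that ρ(u + v, Y′) = e′ and ρ(u + v, Y) = e. -/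
open Metric Filter

/-! Reflexivity makes `Y` proximinal: evaluation at `u`, restricted to the annihilator of `Y`, has
norm at most `ρ(u, Y)`. A norm-preserving extension of it to the whole dual is evaluation at some
`z`, so `‖z‖ ≤ ρ(u, Y)`, and `u - z ∈ Y` because `u` and `z` agree on the annihilator.

Now choose `w ∈ Y` at positive distance from `Y'`. Along the line `z + t • w`, which stays inside
the coset `u + Y`, the distance to `Y'` is continuous in `t`, is at most `‖z‖ ≤ ρ(u, Y)` at `t = 0`
and is unbounded, so it takes every value `e' ≥ ρ(u, Y)`.
-/

section Distance

variable {R X : Type*} [Ring R] [SeminormedAddCommGroup X] [Module R X]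

lemma norm_mkQ_eq_infDist_s15 (Y : Submodule R X) (x : X) : ‖Y.mkQ x‖ = infDist x (Y : Set X) :=
  QuotientAddGroup.norm_mk (S := Y.toAddSubgroup) x

lemma infDist_add_of_mem_s15 {Y : Submodule R X} {v : X} (hv : v ∈ Y) (u : X) :
    infDist (u + v) (Y : Set X) = infDist u (Y : Set X) := by
  have hmk : Y.mkQ v = 0 := (Submodule.Quotient.mk_eq_zero Y).2 hv
  rw [← norm_mkQ_eq_infDist_s15, ← norm_mkQ_eq_infDist_s15, map_add, hmk, add_zero]

end Distance

lemma norm_apply_le_opNorm_mul_infDist {𝕜 E F : Type*} [NontriviallyNormedField 𝕜]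
    [SeminormedAddCommGroup E] [NormedSpace 𝕜 E] [SeminormedAddCommGroup F] [NormedSpace 𝕜 F]
    {Y : Submodule 𝕜 E} {f : E →L[𝕜] F} (hf : ∀ y ∈ Y, f y = 0) (x : E) :
    ‖f x‖ ≤ ‖f‖ * infDist x (Y : Set E) := by
  rcases (norm_nonneg f).eq_or_lt with norm_f | norm_f
  · simpa only [← norm_f, zero_mul] using f.le_opNorm x
  rw [← div_le_iff₀' norm_f, le_infDist ⟨0, Y.zero_mem⟩]
  intro y hy
  rw [div_le_iff₀' norm_f, dist_eq_norm]
  calc ‖f x‖ = ‖f (x - y)‖ := by rw [map_sub, hf y hy, sub_zero]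
    _ ≤ ‖f‖ * ‖x - y‖ := f.le_opNorm _

section RCLike

variable {𝕜 X : Type*} [RCLike 𝕜]

lemma exists_dual_eqOn_norm_le_of_forall_mem [SeminormedAddCommGroup X] [NormedSpace 𝕜 X]
    {P : Submodule 𝕜 X} {f : StrongDual 𝕜 X} {C : ℝ} (hC : 0 ≤ C) (hf : ∀ x ∈ P, ‖f x‖ ≤ C * ‖x‖) :
    ∃ g : StrongDual 𝕜 X, Set.EqOn g f P ∧ ‖g‖ ≤ C := by
  obtain ⟨g, g_extends, norm_g⟩ := exists_extension_norm_eq P (f.comp P.subtypeL)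
  have norm_restrict_le : ‖f.comp P.subtypeL‖ ≤ C :=
    ContinuousLinearMap.opNorm_le_bound _ hC fun x ↦ hf x x.2
  exact ⟨g, fun x hx ↦ g_extends ⟨x, hx⟩, norm_g.trans_le norm_restrict_le⟩

lemma mem_of_forall_mem_polarSubmodule [SeminormedAddCommGroup X] [NormedSpace 𝕜 X]
    {Y : Submodule 𝕜 X} (hY : IsClosed (Y : Set X)) {x : X}
    (hx : ∀ f ∈ StrongDual.polarSubmodule 𝕜 Y, f x = 0) : x ∈ Y := by
  rw [← Submodule.Quotient.mk_eq_zero]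
  refine (SeparatingDual.eq_zero_iff_forall_dual_eq_zero (R := 𝕜) _).2 fun g ↦ ?_
  refine hx (g.comp Y.mkQL) ((StrongDual.mem_polarSubmodule 𝕜 Y _).2 fun y hy ↦ ?_)
  simp [(Submodule.Quotient.mk_eq_zero Y).2 hy]

lemma exists_mem_norm_sub_eq_infDist_of_reflexive [NormedAddCommGroup X] [NormedSpace 𝕜 X]
    (hrefl : Function.Surjective (NormedSpace.inclusionInDoubleDual 𝕜 X))
    {Y : Submodule 𝕜 X} (hY : IsClosed (Y : Set X)) (u : X) :
    ∃ y ∈ Y, ‖u - y‖ = infDist u (Y : Set X) := by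
  have norm_eval_le : ∀ f ∈ StrongDual.polarSubmodule 𝕜 Y,
      ‖NormedSpace.inclusionInDoubleDual 𝕜 X u f‖ ≤ infDist u (Y : Set X) * ‖f‖ := fun f hf ↦ by
    rw [mul_comm]
    exact norm_apply_le_opNorm_mul_infDist ((StrongDual.mem_polarSubmodule 𝕜 Y f).1 hf) u
  obtain ⟨F, F_extends, norm_F_le⟩ :=
    exists_dual_eqOn_norm_le_of_forall_mem infDist_nonneg norm_eval_le
  obtain ⟨z, rfl⟩ := hrefl F
  have sub_mem : u - z ∈ Y := mem_of_forall_mem_polarSubmodule hY fun f hf ↦ by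
    rw [map_sub, sub_eq_zero]
    exact (F_extends hf).symm
  have norm_z_le : ‖z‖ ≤ infDist u (Y : Set X) :=
    calc
      ‖z‖ = ‖NormedSpace.inclusionInDoubleDual 𝕜 X z‖ :=
        ((NormedSpace.inclusionInDoubleDualLi 𝕜).norm_map z).symm
      _ ≤ infDist u (Y : Set X) := norm_F_le
  refine ⟨u - z, sub_mem, le_antisymm ?_ ?_⟩
  · rwa [sub_sub_cancel]
  · rw [← dist_eq_norm]
    exact infDist_le_dist_of_mem sub_mem

lemma exists_norm_add_smul_eq [SeminormedAddCommGroup X] [NormedSpace 𝕜 X] {a b : X} {r : ℝ}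
    (ha : ‖a‖ ≤ r) (hb : ‖b‖ ≠ 0) : ∃ c : 𝕜, ‖a + c • b‖ = r := by
  have hcont : Continuous fun t : ℝ ↦ ‖a + (t : 𝕜) • b‖ := by fun_prop
  have hlarge : r ≤ ‖a + (((r + ‖a‖) / ‖b‖ : ℝ) : 𝕜) • b‖ := by
    set T : ℝ := (r + ‖a‖) / ‖b‖
    have hT : 0 ≤ T := div_nonneg (by linarith [norm_nonneg a]) (norm_nonneg b)
    calc r = T * ‖b‖ - ‖a‖ := by rw [div_mul_cancel₀ _ hb, add_sub_cancel_right]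
      _ = ‖(T : 𝕜) • b‖ - ‖a‖ := by rw [norm_smul, RCLike.norm_of_nonneg hT]
      _ ≤ ‖(T : 𝕜) • b + a‖ := norm_sub_le_norm_add _ _
      _ = ‖a + (T : 𝕜) • b‖ := by rw [add_comm]
  obtain ⟨t, ht⟩ := mem_range_of_exists_le_of_exists_ge hcont ⟨0, by simpa using ha⟩ ⟨_, hlarge⟩
  exact ⟨t, ht⟩

lemma exists_mem_infDist_add_eq [SeminormedAddCommGroup X] [NormedSpace 𝕜 X]
    {Y' Y : Submodule 𝕜 X} (hY : ¬ Y ≤ Y'.topologicalClosure) {u y : X} (hy : y ∈ Y) {r : ℝ}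
    (hr : ‖u - y‖ ≤ r) : ∃ v ∈ Y, infDist (u + v) (Y' : Set X) = r := by
  obtain ⟨w, hwY, hwY'⟩ := SetLike.not_le_iff_exists.1 hY
  have norm_mk_w : ‖Y'.mkQ w‖ ≠ 0 :=
    mt (QuotientAddGroup.norm_mk_eq_zero_iff_mem_closure (S := Y'.toAddSubgroup)).1 hwY'
  have norm_mk_le : ‖Y'.mkQ (u - y)‖ ≤ r := (Submodule.Quotient.norm_mk_le Y' _).trans hr
  obtain ⟨c, hc⟩ := exists_norm_add_smul_eq (𝕜 := 𝕜) norm_mk_le norm_mk_w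
  refine ⟨c • w - y, Y.sub_mem (Y.smul_mem c hwY) hy, ?_⟩
  rw [← norm_mkQ_eq_infDist_s15, ← hc, ← map_smul, ← map_add, sub_add_eq_add_sub, add_sub_assoc]

theorem stmt_15_general [NormedAddCommGroup X] [NormedSpace 𝕜 X]
    (hrefl : Function.Surjective (NormedSpace.inclusionInDoubleDual 𝕜 X))
    {Y' Y : Submodule 𝕜 X} (hclosed : IsClosed (Y : Set X)) (hY : ¬ Y ≤ Y'.topologicalClosure)
    (u : X) {e' : ℝ} (he' : infDist u (Y : Set X) ≤ e') :
    ∃ v ∈ Y, infDist (u + v) (Y' : Set X) = e' ∧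
      infDist (u + v) (Y : Set X) = infDist u (Y : Set X) := by
  obtain ⟨y, hy, norm_sub⟩ := exists_mem_norm_sub_eq_infDist_of_reflexive hrefl hclosed u
  obtain ⟨v, hv, hvY'⟩ := exists_mem_infDist_add_eq hY hy (norm_sub.trans_le he')
  exact ⟨v, hv, hvY', infDist_add_of_mem_s15 hv u⟩

end RCLike

/-- In a reflexive Banach space, if `Y' ⊊ Y` are closed subspaces, `u ∈ X` and
`e = ρ(u, Y)`, then for every `e' ≥ e` there is `v ∈ Y` with `ρ(u + v, Y') = e'`
and `ρ(u + v, Y) = e`. -/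
theorem stmt_15 (X : Type*) [NormedAddCommGroup X] [NormedSpace ℝ X] [CompleteSpace X]
    (hrefl : Function.Surjective (NormedSpace.inclusionInDoubleDual ℝ X))
    (Y' Y : Submodule ℝ X) (hclosed' : IsClosed (Y' : Set X)) (hclosed : IsClosed (Y : Set X))
    (hle : Y' ≤ Y) (hne : Y' ≠ Y) (u : X) (e : ℝ) (he : e = infDist u (Y : Set X)) :
    ∀ e' : ℝ, e ≤ e' → ∃ v ∈ Y, infDist (u + v) (Y' : Set X) = e' ∧
      infDist (u + v) (Y : Set X) = e := by
  subst he
  have hY : ¬ Y ≤ Y'.topologicalClosure := by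
    rw [hclosed'.submodule_topologicalClosure_eq]
    exact fun h ↦ hne (hle.antisymm h)
  exact fun e' he' ↦ stmt_15_general hrefl hclosed hY u he'
end

section
/- Let (X, ‖·‖) be a normed linear space and let Q be a subspace of X. Pick two elements x₁, x₂ ∈ X not belonging to the closure of Q and such that x₂ does not belong to the linear span of {x₁} ∪ Q. Then there exists a non-zero continuous linear functional f : X → ℝ such that f(q) = 0 for all q ∈ Q, ‖f‖ = 1/ρ(x₁, Q), f(x₁) = 1, and f(x₂) = lim_{a→+∞} (a − ρ(x₂ − a·x₁, Q)/ρ(x₁, Q)). -/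
open Metric Filter

/-!
The norm of `X ⧸ Q` is the distance to `Q`, so everything can be done in the quotient, for the
classes `e` of `x₁` and `y` of `-x₂`. The limit in question is governed by
`N x = lim (‖x + t • e‖ - t * ‖e‖)`, the one-sided derivative of the norm at `e` in the direction
`x`. It is sublinear, lies below the norm, and satisfies `N (-e) ≤ -‖e‖`, which forces every
linear `g ≤ N` to have `g e = ‖e‖`. The same remark applied to `N` instead of the norm shows that a
linear functional below the derivative of `N` at `y` also takes the value `N y` at `y`, so a single
application of Hahn-Banach to this second derivative yields both prescribed values.
-/

section Sublinear

variable {E : Type*} [AddCommGroup E] [Module ℝ E]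

/-- Sublinear functionals on a real vector space: subadditive and positively homogeneous, but
possibly negative and asymmetric, unlike seminorms. -/
structure IsSublinear (p : E → ℝ) : Prop where
  map_add_le : ∀ x y, p (x + y) ≤ p x + p y
  map_smul_of_pos : ∀ {c : ℝ}, 0 < c → ∀ x, p (c • x) = c * p x

/-- The one-sided derivative of a sublinear functional `p` at `e` in the direction `x`. For `t > 0`
the term `p (x + t • e) - t * p e` is the difference quotient `(p (e + h • x) - p e) / h` with
`h = 1 / t`; it decreases in `t`, so that the limit is an infimum. -/
noncomputable def dirDeriv (p : E → ℝ) (e x : E) : ℝ :=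
  ⨅ t : ℝ, (p (x + t • e) - t * p e)

namespace IsSublinear

variable {p : E → ℝ}

protected theorem map_zero (hp : IsSublinear p) : p 0 = 0 := by
  have h := hp.map_smul_of_pos two_pos 0
  rw [smul_zero] at h
  linarith

theorem map_smul_of_nonneg (hp : IsSublinear p) {c : ℝ} (hc : 0 ≤ c) (x : E) :
    p (c • x) = c * p x := by
  rcases hc.eq_or_lt with rfl | hc
  · rw [zero_smul, zero_mul, hp.map_zero]
  · exact hp.map_smul_of_pos hc x

theorem mul_le_map_smul (hp : IsSublinear p) (t : ℝ) (x : E) : t * p x ≤ p (t • x) := by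
  rcases le_total 0 t with ht | ht
  · exact (hp.map_smul_of_nonneg ht x).ge
  · have hsum : 0 ≤ p (t • x) + p (-t • x) := by
      simpa only [← add_smul, add_neg_cancel, zero_smul, hp.map_zero]
        using hp.map_add_le (t • x) (-t • x)
    rw [hp.map_smul_of_nonneg (neg_nonneg.2 ht)] at hsum
    linarith

theorem antitone_sub_mul (hp : IsSublinear p) (e x : E) :
    Antitone fun t : ℝ => p (x + t • e) - t * p e := by
  intro s t hst
  have hsplit : x + t • e = (x + s • e) + (t - s) • e := by module
  have hle := hp.map_add_le (x + s • e) ((t - s) • e)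
  rw [← hsplit, hp.map_smul_of_nonneg (sub_nonneg.2 hst)] at hle
  dsimp only
  linarith

theorem bddBelow_range_sub_mul (hp : IsSublinear p) (e x : E) :
    BddBelow (Set.range fun t : ℝ => p (x + t • e) - t * p e) := by
  refine ⟨-p (-x), Set.forall_mem_range.2 fun t => ?_⟩
  have hle := hp.map_add_le (x + t • e) (-x)
  rw [add_neg_cancel_comm] at hle
  linarith [hp.mul_le_map_smul t e]

theorem tendsto_dirDeriv (hp : IsSublinear p) (e x : E) :
    Tendsto (fun t : ℝ => p (x + t • e) - t * p e) atTop (nhds (dirDeriv p e x)) :=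
  tendsto_atTop_ciInf (hp.antitone_sub_mul e x) (hp.bddBelow_range_sub_mul e x)

theorem dirDeriv_le_sub_mul (hp : IsSublinear p) (e x : E) (t : ℝ) :
    dirDeriv p e x ≤ p (x + t • e) - t * p e :=
  ciInf_le (hp.bddBelow_range_sub_mul e x) t

theorem dirDeriv_le (hp : IsSublinear p) (e x : E) : dirDeriv p e x ≤ p x := by
  simpa only [zero_smul, add_zero, zero_mul, sub_zero] using hp.dirDeriv_le_sub_mul e x 0

theorem dirDeriv_neg_self_le (hp : IsSublinear p) (e : E) : dirDeriv p e (-e) ≤ -p e := by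
  simpa only [one_smul, neg_add_cancel, hp.map_zero, one_mul, zero_sub]
    using hp.dirDeriv_le_sub_mul e (-e) 1

protected theorem dirDeriv (hp : IsSublinear p) (e : E) : IsSublinear (dirDeriv p e) where
  map_add_le x y := by
    have hlim := (hp.tendsto_dirDeriv e (x + y)).comp (tendsto_id.const_mul_atTop two_pos)
    refine le_of_tendsto_of_tendsto' hlim
      ((hp.tendsto_dirDeriv e x).add (hp.tendsto_dirDeriv e y)) fun t => ?_
    have hsplit : x + y + (2 * t) • e = (x + t • e) + (y + t • e) := by module
    have hle := hp.map_add_le (x + t • e) (y + t • e)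
    rw [← hsplit] at hle
    dsimp only [Function.comp_apply, id]
    linarith
  map_smul_of_pos {c} hc x := by
    have hlim := (hp.tendsto_dirDeriv e (c • x)).comp (tendsto_id.const_mul_atTop hc)
    refine tendsto_nhds_unique hlim (((hp.tendsto_dirDeriv e x).const_mul c).congr fun t => ?_)
    have hscale : c • x + (c * t) • e = c • (x + t • e) := by module
    dsimp only [Function.comp_apply, id]
    rw [hscale, hp.map_smul_of_pos hc]
    ring

theorem exists_linearMap_le (hp : IsSublinear p) : ∃ f : E →ₗ[ℝ] ℝ, ∀ x, f x ≤ p x := by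
  obtain ⟨f, -, hf⟩ := exists_extension_of_le_sublinear ⊥ p
    (fun _ hc => hp.map_smul_of_pos hc) hp.map_add_le fun x => by
      rw [(Submodule.mem_bot ℝ).1 x.2, hp.map_zero]
      rfl
  exact ⟨f, hf⟩

theorem apply_eq_of_le_dirDeriv (hp : IsSublinear p) {e : E} {f : E →ₗ[ℝ] ℝ}
    (hf : ∀ x, f x ≤ dirDeriv p e x) : f e = p e := by
  refine le_antisymm ((hf e).trans (hp.dirDeriv_le e e)) ?_
  have hneg : f (-e) ≤ -p e := (hf (-e)).trans (hp.dirDeriv_neg_self_le e)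
  rwa [map_neg, neg_le_neg_iff] at hneg

theorem exists_linearMap_le_apply_eq_dirDeriv (hp : IsSublinear p) (e y : E) :
    ∃ f : E →ₗ[ℝ] ℝ, (∀ x, f x ≤ p x) ∧ f e = p e ∧ f y = dirDeriv p e y := by
  have hN : IsSublinear (dirDeriv p e) := hp.dirDeriv e
  obtain ⟨f, hf⟩ := (hN.dirDeriv y).exists_linearMap_le
  have hfN (x : E) : f x ≤ dirDeriv p e x := (hf x).trans (hN.dirDeriv_le y x)
  exact ⟨f, fun x => (hfN x).trans (hp.dirDeriv_le e x), hp.apply_eq_of_le_dirDeriv hfN,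
    hN.apply_eq_of_le_dirDeriv hf⟩

end IsSublinear

end Sublinear

section Norm

variable {E : Type*} [SeminormedAddCommGroup E] [NormedSpace ℝ E]

theorem isSublinear_norm : IsSublinear (norm : E → ℝ) where
  map_add_le := norm_add_le
  map_smul_of_pos hc x := norm_smul_of_nonneg hc.le x

theorem exists_strongDual_norm_eq_one_apply_eq_dirDeriv {e : E} (he : ‖e‖ ≠ 0) (y : E) :
    ∃ g : StrongDual ℝ E, ‖g‖ = 1 ∧ g e = ‖e‖ ∧ g y = dirDeriv norm e y := by
  obtain ⟨g, hg_le, hge, hgy⟩ := isSublinear_norm.exists_linearMap_le_apply_eq_dirDeriv e y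
  have hg_norm_le (x : E) : ‖g x‖ ≤ 1 * ‖x‖ := by
    rw [one_mul, Real.norm_eq_abs]
    refine abs_le'.2 ⟨hg_le x, ?_⟩
    simpa only [map_neg, norm_neg] using hg_le (-x)
  refine ⟨g.mkContinuous 1 hg_norm_le, le_antisymm (g.mkContinuous_norm_le zero_le_one _) ?_,
    hge, hgy⟩
  have hbound := (g.mkContinuous 1 hg_norm_le).ratio_le_opNorm e
  rwa [LinearMap.mkContinuous_apply, hge, norm_norm, div_self he] at hbound

theorem tendsto_sub_norm_sub_smul_div {e : E} (he : ‖e‖ ≠ 0) (y : E) :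
    Tendsto (fun a : ℝ => a - ‖y - a • e‖ / ‖e‖) atTop
      (nhds (-(dirDeriv norm e (-y) / ‖e‖))) := by
  refine ((isSublinear_norm.tendsto_dirDeriv e (-y)).div_const ‖e‖).neg.congr fun a => ?_
  have hsymm : ‖-y + a • e‖ = ‖y - a • e‖ := by rw [neg_add_eq_sub, norm_sub_rev]
  rw [hsymm]
  field_simp
  ring

theorem exists_strongDual_apply_eq_one_tendsto {e : E} (he : ‖e‖ ≠ 0) (y : E) :
    ∃ g : StrongDual ℝ E, ‖g‖ = 1 / ‖e‖ ∧ g e = 1 ∧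
      Tendsto (fun a : ℝ => a - ‖y - a • e‖ / ‖e‖) atTop (nhds (g y)) := by
  obtain ⟨g, hg_norm, hge, hgy⟩ := exists_strongDual_norm_eq_one_apply_eq_dirDeriv he (-y)
  refine ⟨‖e‖⁻¹ • g, ?_, ?_, ?_⟩
  · rw [norm_smul, hg_norm, norm_inv, norm_norm, mul_one, one_div]
  · rw [smul_apply, hge, smul_eq_mul, inv_mul_cancel₀ he]
  · have hgy' : (‖e‖⁻¹ • g) y = -(dirDeriv norm e (-y) / ‖e‖) := by
      rw [← hgy, map_neg, smul_apply, smul_eq_mul]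
      ring
    rw [hgy']
    exact tendsto_sub_norm_sub_smul_div he y

end Norm

section Quotient

theorem norm_quotientMk_eq_infDist {R M : Type*} [Ring R] [SeminormedAddCommGroup M] [Module R M]
    (S : Submodule R M) (x : M) :
    ‖(Submodule.Quotient.mk x : M ⧸ S)‖ = infDist x (S : Set M) :=
  QuotientAddGroup.norm_mk (S := S.toAddSubgroup) x

theorem opNorm_comp_mkQL {𝕜 E F : Type*} [NontriviallyNormedField 𝕜]
    [SeminormedAddCommGroup E] [NormedSpace 𝕜 E] [SeminormedAddCommGroup F] [NormedSpace 𝕜 F]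
    (S : Submodule 𝕜 E) (g : E ⧸ S →L[𝕜] F) : ‖g ∘L S.mkQL‖ = ‖g‖ := by
  refine le_antisymm ?_ ?_
  · exact ContinuousLinearMap.opNorm_le_bound _ (norm_nonneg g) fun x =>
      g.le_opNorm_of_le (Submodule.Quotient.norm_mk_le S x)
  · refine g.opNorm_le_bound (norm_nonneg _) fun z =>
      le_mul_of_forall_lt₀ fun C hC r hr => ?_
    obtain ⟨x, rfl, hx⟩ := QuotientAddGroup.norm_lt_iff.1 hr
    exact (g ∘L S.mkQL).le_of_opNorm_le_of_le hC.le hx.le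

end Quotient

theorem stmt_19_general {X : Type*} [SeminormedAddCommGroup X] [NormedSpace ℝ X]
    (Q : Submodule ℝ X) {x₁ : X} (h₁ : x₁ ∉ closure (Q : Set X)) (x₂ : X) :
    ∃ f : X →L[ℝ] ℝ, f ≠ 0 ∧ (∀ q ∈ Q, f q = 0) ∧
      ‖f‖ = 1 / infDist x₁ (Q : Set X) ∧ f x₁ = 1 ∧
      Tendsto (fun a : ℝ => a - infDist (x₂ - a • x₁) (Q : Set X) / infDist x₁ (Q : Set X))
        atTop (nhds (f x₂)) := by
  have hρ : 0 < infDist x₁ (Q : Set X) := (infDist_pos_iff_notMem_closure ⟨0, Q.zero_mem⟩).1 h₁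
  simp only [← norm_quotientMk_eq_infDist, Submodule.Quotient.mk_sub,
    Submodule.Quotient.mk_smul] at hρ ⊢
  obtain ⟨g, hg_norm, hg₁, hg₂⟩ :=
    exists_strongDual_apply_eq_one_tendsto hρ.ne' (Submodule.Quotient.mk x₂ : X ⧸ Q)
  refine ⟨g ∘L Q.mkQL, ?_, fun q hq => ?_, (opNorm_comp_mkQL Q g).trans hg_norm, hg₁, hg₂⟩
  · exact fun hf => one_ne_zero (hg₁.symm.trans (DFunLike.congr_fun hf x₁))
  · exact (congrArg g ((Submodule.Quotient.mk_eq_zero Q).2 hq)).trans (map_zero g)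

/-- Extended Hahn-Banach lemma: given a subspace `Q` and `x₁, x₂ ∉ closure Q` with
`x₂ ∉ span ({x₁} ∪ Q)`, there is a non-zero continuous linear functional `f` vanishing on
`Q` with `‖f‖ = 1 / ρ(x₁, Q)`, `f x₁ = 1` and
`f x₂ = lim_{a → +∞} (a - ρ(x₂ - a • x₁, Q) / ρ(x₁, Q))`. -/
theorem stmt_19 (X : Type*) [NormedAddCommGroup X] [NormedSpace ℝ X]
    (Q : Submodule ℝ X) (x₁ x₂ : X)
    (h₁ : x₁ ∉ closure (Q : Set X)) (h₂ : x₂ ∉ closure (Q : Set X))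
    (h₃ : x₂ ∉ Submodule.span ℝ (insert x₁ (Q : Set X))) :
    ∃ f : X →L[ℝ] ℝ, f ≠ 0 ∧ (∀ q ∈ Q, f q = 0) ∧
      ‖f‖ = 1 / infDist x₁ (Q : Set X) ∧ f x₁ = 1 ∧
      Tendsto (fun a : ℝ => a - infDist (x₂ - a • x₁) (Q : Set X) / infDist x₁ (Q : Set X))
        atTop (nhds (f x₂)) :=
  stmt_19_general Q h₁ x₂
end
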